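/- Suppose 1 ≤ S < N. Then there does not exist a uniformly minimum variance unbiased (UMVU) estimator for the sparse signal-in-noise model: there is no measurable unbiased estimator x̂* such that for every measurable unbiased estimator x̂ and every x ∈ X_S, ε(x; x̂*) ≤ ε(x; x̂). -/

import Mathlib

open MeasureTheory ProbabilityTheory Filter
open scoped ENNReal Classical

/-- The product Gaussian measure `P_x` on `ℝ^N` with mean `x` and variance `σ²` per coordinate. -/
noncomputable def gaussP (N : ℕ) (σ : ℝ) (x : Fin N → ℝ) : Measure (Fin N → ℝ) :=
  MeasureTheory.Measure.pi fun i => gaussianReal (x i) (Real.toNNReal (σ ^ 2))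

/-- The support of `x`: indices with nonzero entries. Its cardinality is `‖x‖₀`. -/
noncomputable def supp {N : ℕ} (x : Fin N → ℝ) : Finset (Fin N) :=
  Finset.univ.filter fun i => x i ≠ 0

/-- The sparse parameter set `X_S = {x : ‖x‖₀ ≤ S}`. -/
def sparseSet (N S : ℕ) : Set (Fin N → ℝ) := {x | (supp x).card ≤ S}

/-- An estimator is unbiased if each component is `P_x`-integrable with mean `x i`
for every `x ∈ X_S`. -/
def Unbiased (N S : ℕ) (σ : ℝ) (est : (Fin N → ℝ) → Fin N → ℝ) : Prop :=
  ∀ x ∈ sparseSet N S, ∀ i,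
    Integrable (fun y => est y i) (gaussP N σ x) ∧
    (∫ y, est y i ∂gaussP N σ x) = x i

/-- The MSE `ε(x; x̂) = ∫ ‖x̂(y) − x‖₂² dP_x(y)`, as an extended real. -/
noncomputable def MSE (N : ℕ) (σ : ℝ) (est : (Fin N → ℝ) → Fin N → ℝ)
    (x : Fin N → ℝ) : ℝ≥0∞ :=
  ∫⁻ y, ENNReal.ofReal (∑ i, (est y i - x i) ^ 2) ∂gaussP N σ x

/-!
A locally minimum variance unbiased estimator at `x` is orthogonal in `L²(P_x)` to every unbiased
estimator of zero. Such estimators of zero are the products `U_t = ∏ i ∈ T, (L_{t i}(y i) - 1)` of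
recentred Gaussian likelihood ratios with `|T| = S + 1`: their mean under `P_z` is
`∏ i ∈ T, (exp (z i * t i) - 1)`, which vanishes for `z ∈ X_S` because `z` has a zero in `T`.

Let `|supp x| = S`, let `k ∉ supp x`, let `T = supp x ∪ {k}`, and suppose that one estimator `x̂`
is optimal both at `0` and at `x`. Orthogonality at `0` for all `t` forces `x̂ k - y k` to have mean
zero under `P_z` for all `z` supported in `T`, not only for the sparse ones. Hence `x̂ k - y k` is
orthogonal to `U_t` under `P_x`. As `x̂ k` is orthogonal to `U_t` as well, so is `y k`; but for
`t = 1` the inner product of `U_t` and `y k` is `σ² * ∏ i ∈ supp x, (exp (x i) - 1) ≠ 0`.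
-/

open scoped NNReal

section ProductMeasures

variable {ι : Type*} [Fintype ι] {X : ι → Type*} {mX : ∀ i, MeasurableSpace (X i)}
  {μ : ∀ i, Measure (X i)}

lemma pi_tilted [∀ i, SigmaFinite (μ i)] (f : ∀ i, X i → ℝ) :
    Measure.pi (fun i ↦ (μ i).tilted (f i)) = (Measure.pi μ).tilted fun y ↦ ∑ i, f i (y i) := by
  refine Measure.pi_eq fun s _ ↦ ?_
  have integral_density_univ_pi :
      ∫ y in Set.univ.pi s, Real.exp (∑ i, f i (y i)) /
          (∫ z, Real.exp (∑ i, f i (z i)) ∂Measure.pi μ) ∂Measure.pi μ =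
        ∏ i, ∫ u in s i, Real.exp (f i u) / (∫ z, Real.exp (f i z) ∂μ i) ∂μ i := by
    simp only [integral_div, Real.exp_sum, Finset.prod_div_distrib, Measure.restrict_pi_pi]
    rw [integral_fintype_prod_eq_prod fun i u ↦ Real.exp (f i u),
      integral_fintype_prod_eq_prod fun i u ↦ Real.exp (f i u)]
  simp only [tilted_apply_eq_ofReal_integral, integral_density_univ_pi]
  exact ENNReal.ofReal_prod_of_nonneg fun i _ ↦ by positivity

variable {𝕜 : Type*} [RCLike 𝕜] [∀ i, IsProbabilityMeasure (μ i)]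

lemma integral_finsetProd_eq_prod (s : Finset ι) (f : ∀ i, X i → 𝕜) :
    ∫ y, ∏ i ∈ s, f i (y i) ∂Measure.pi μ = ∏ i ∈ s, ∫ u, f i u ∂μ i := by
  calc ∫ y, ∏ i ∈ s, f i (y i) ∂Measure.pi μ
      = ∫ y, ∏ i, (if i ∈ s then f i else 1) (y i) ∂Measure.pi μ := by
        simp only [ite_apply, Pi.one_apply, Finset.prod_ite_mem_eq]
    _ = ∏ i, ∫ u, (if i ∈ s then f i else 1) u ∂μ i := integral_fintype_prod_eq_prod _
    _ = ∏ i ∈ s, ∫ u, f i u ∂μ i := by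
        rw [← Finset.prod_ite_mem_eq s]
        refine Finset.prod_congr rfl fun i _ ↦ ?_
        split_ifs <;> simp

lemma integrable_finsetProd {s : Finset ι} {f : ∀ i, X i → 𝕜}
    (hf : ∀ i ∈ s, Integrable (f i) (μ i)) :
    Integrable (fun y ↦ ∏ i ∈ s, f i (y i)) (Measure.pi μ) := by
  have integrable_ite (i : ι) : Integrable (if i ∈ s then f i else 1) (μ i) := by
    split_ifs with hi
    exacts [hf i hi, integrable_const 1]
  simpa only [ite_apply, Pi.one_apply, Finset.prod_ite_mem_eq]
    using Integrable.fintype_prod_dep integrable_ite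

lemma memLp_finsetProd {p : ℝ≥0∞} (hp₀ : p ≠ 0) (hp : p ≠ ∞) {s : Finset ι}
    {f : ∀ i, X i → 𝕜} (hf : ∀ i ∈ s, MemLp (f i) p (μ i)) :
    MemLp (fun y ↦ ∏ i ∈ s, f i (y i)) p (Measure.pi μ) := by
  have aestronglyMeasurable_prod :
      AEStronglyMeasurable (fun y ↦ ∏ i ∈ s, f i (y i)) (Measure.pi μ) :=
    Finset.aestronglyMeasurable_fun_prod s fun i hi ↦
      (hf i hi).aestronglyMeasurable.comp_measurePreserving (measurePreserving_eval μ i)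
  rw [← integrable_norm_rpow_iff aestronglyMeasurable_prod hp₀ hp]
  simp only [norm_prod, ← Real.finsetProd_rpow _ _ fun _ _ ↦ norm_nonneg _]
  exact integrable_finsetProd fun i hi ↦
    (integrable_norm_rpow_iff (hf i hi).aestronglyMeasurable hp₀ hp).2 (hf i hi)

end ProductMeasures

lemma integral_exp_mul_gaussianReal (m : ℝ) (v : ℝ≥0) (t : ℝ) :
    ∫ s, Real.exp (t * s) ∂gaussianReal m v = Real.exp (m * t + v * t ^ 2 / 2) :=
  congrFun mgf_fun_id_gaussianReal t

lemma gaussianReal_tilted_mul (m : ℝ) (v : ℝ≥0) (t : ℝ) :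
    (gaussianReal m v).tilted (fun s ↦ t * s) = gaussianReal (m + v * t) v := by
  refine Measure.ext_of_complexMGF_id_eq (funext fun z ↦ ?_)
  calc ∫ s, Complex.exp (z * s) ∂(gaussianReal m v).tilted (fun s ↦ t * s)
      = ∫ s, Complex.exp ((z + t) * s) * Complex.exp (-(m * t + v * t ^ 2 / 2))
          ∂gaussianReal m v := by
        rw [integral_tilted, integral_exp_mul_gaussianReal]
        congr with s
        rw [← Real.exp_sub, Complex.real_smul, Complex.ofReal_exp, ← Complex.exp_add,
          ← Complex.exp_add]
        push_cast
        ring_nf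
    _ = complexMGF id (gaussianReal m v) (z + t) * Complex.exp (-(m * t + v * t ^ 2 / 2)) :=
        integral_mul_const _ _
    _ = complexMGF id (gaussianReal (m + v * t) v) z := by
        rw [complexMGF_id_gaussianReal, complexMGF_id_gaussianReal, ← Complex.exp_add]
        push_cast
        ring_nf

/-- The likelihood ratio `dN(v * t, v) / dN(0, v)` at `s`: the Esscher transform of the centred
Gaussian of variance `v`. Parametrising by `t` rather than by the mean `v * t` avoids dividing
by `v`. -/
noncomputable def gaussianLR (v : ℝ≥0) (t s : ℝ) : ℝ :=
  Real.exp (t * s - v * t ^ 2 / 2)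

@[simp]
lemma gaussianLR_zero (v : ℝ≥0) (s : ℝ) : gaussianLR v 0 s = 1 := by
  simp [gaussianLR]

lemma gaussianLR_eq_mul_exp_div (m : ℝ) (v : ℝ≥0) (t s : ℝ) :
    gaussianLR v t s =
      Real.exp (m * t) * (Real.exp (t * s) / ∫ u, Real.exp (t * u) ∂gaussianReal m v) := by
  rw [integral_exp_mul_gaussianReal, ← Real.exp_sub, ← Real.exp_add, gaussianLR]
  ring_nf

@[fun_prop]
lemma measurable_gaussianLR (v : ℝ≥0) (t : ℝ) : Measurable (gaussianLR v t) := by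
  unfold gaussianLR
  fun_prop

lemma memLp_gaussianLR (m : ℝ) (v : ℝ≥0) (t : ℝ) (p : ℝ≥0) :
    MemLp (gaussianLR v t) p (gaussianReal m v) := by
  rcases eq_or_ne p 0 with rfl | hp
  · exact memLp_zero_iff_aestronglyMeasurable.2 (by fun_prop)
  rw [← integrable_norm_rpow_iff (by fun_prop) (mod_cast hp) ENNReal.coe_ne_top]
  refine ((integrable_exp_mul_gaussianReal (p * t)).mul_const
    (Real.exp (-(p * (v * t ^ 2 / 2))))).congr (.of_forall fun s ↦ ?_)
  simp only [gaussianLR, Real.norm_eq_abs, Real.abs_exp, ENNReal.coe_toReal, ← Real.exp_mul,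
    ← Real.exp_add]
  ring_nf

lemma integral_gaussianLR_mul (m : ℝ) (v : ℝ≥0) (t : ℝ) (g : ℝ → ℝ) :
    ∫ s, gaussianLR v t s * g s ∂gaussianReal m v =
      Real.exp (m * t) * ∫ s, g s ∂gaussianReal (m + v * t) v := by
  simp only [← gaussianReal_tilted_mul, integral_tilted, smul_eq_mul,
    gaussianLR_eq_mul_exp_div m, mul_assoc, integral_const_mul]

lemma integral_gaussianLR (m : ℝ) (v : ℝ≥0) (t : ℝ) :
    ∫ s, gaussianLR v t s ∂gaussianReal m v = Real.exp (m * t) := by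
  simpa using integral_gaussianLR_mul m v t 1

section PiGaussian

variable {ι : Type*}

/-- The product over `s` of the likelihood ratios of `N(v * t i, v)` with respect to `N(0, v)`, each
recentred to have mean zero under `N(0, v)`. It integrates to zero against every product Gaussian
whose mean has a zero in `s`: this is the source of unbiased estimators of zero. -/
noncomputable def prodLRSubOne (v : ℝ≥0) (s : Finset ι) (t y : ι → ℝ) : ℝ :=
  ∏ i ∈ s, (gaussianLR v (t i) (y i) - 1)

@[fun_prop]
lemma measurable_prodLRSubOne (v : ℝ≥0) (s : Finset ι) (t : ι → ℝ) :
    Measurable (prodLRSubOne v s t) := by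
  unfold prodLRSubOne
  fun_prop

variable [Fintype ι]

/-- The law on `ι → ℝ` of a Gaussian vector with mean `x` and independent coordinates of common
variance `v`. -/
noncomputable abbrev piGaussian (v : ℝ≥0) (x : ι → ℝ) : Measure (ι → ℝ) :=
  Measure.pi fun i ↦ gaussianReal (x i) v

lemma integral_prod_gaussianLR_mul (v : ℝ≥0) (x t : ι → ℝ) (g : (ι → ℝ) → ℝ) :
    ∫ y, (∏ i, gaussianLR v (t i) (y i)) * g y ∂piGaussian v x =
      Real.exp (∑ i, x i * t i) * ∫ y, g y ∂piGaussian v (fun i ↦ x i + v * t i) := by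
  have prod_gaussianLR (y : ι → ℝ) : ∏ i, gaussianLR v (t i) (y i) =
      Real.exp (∑ i, x i * t i) * (Real.exp (∑ i, t i * y i) /
        ∫ z, Real.exp (∑ i, t i * z i) ∂piGaussian v x) := by
    simp only [Real.exp_sum]
    rw [integral_fintype_prod_eq_prod fun i u ↦ Real.exp (t i * u), ← Finset.prod_div_distrib,
      ← Finset.prod_mul_distrib]
    exact Finset.prod_congr rfl fun i _ ↦ gaussianLR_eq_mul_exp_div ..
  simp only [piGaussian, ← gaussianReal_tilted_mul, pi_tilted, integral_tilted, smul_eq_mul,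
    ← integral_const_mul, prod_gaussianLR, mul_assoc]

lemma integral_finsetProd_gaussianLR_mul [DecidableEq ι] (v : ℝ≥0) (s : Finset ι) (x t : ι → ℝ)
    (g : (ι → ℝ) → ℝ) :
    ∫ y, (∏ i ∈ s, gaussianLR v (t i) (y i)) * g y ∂piGaussian v x =
      Real.exp (∑ i ∈ s, x i * t i) *
        ∫ y, g y ∂piGaussian v (s.piecewise (fun i ↦ x i + v * t i) x) := by
  have h := integral_prod_gaussianLR_mul v x (s.piecewise t 0) g
  simp only [Finset.piecewise, Pi.zero_apply, apply_ite (gaussianLR v), ite_apply,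
    gaussianLR_zero, Finset.prod_ite_mem_eq, mul_ite, mul_zero, Finset.sum_ite_mem_eq] at h
  rw [h]
  congr! 4 with i
  simp only [Finset.piecewise]
  split_ifs <;> simp

lemma memLp_prodLRSubOne (v : ℝ≥0) (s : Finset ι) (x t : ι → ℝ) :
    MemLp (prodLRSubOne v s t) 2 (piGaussian v x) :=
  memLp_finsetProd (f := fun i u ↦ gaussianLR v (t i) u - 1) two_ne_zero ENNReal.ofNat_ne_top
    fun i _ ↦ (memLp_gaussianLR (x i) v (t i) 2).sub (memLp_const 1)

lemma integral_gaussianLR_sub_one (m : ℝ) (v : ℝ≥0) (t : ℝ) :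
    ∫ s, (gaussianLR v t s - 1) ∂gaussianReal m v = Real.exp (m * t) - 1 := by
  rw [integral_sub ((memLp_gaussianLR m v t 1).integrable le_rfl) (integrable_const 1),
    integral_gaussianLR]
  simp

lemma integral_gaussianLR_sub_one_mul_id (m : ℝ) (v : ℝ≥0) (t : ℝ) :
    ∫ s, (gaussianLR v t s - 1) * s ∂gaussianReal m v = Real.exp (m * t) * (m + v * t) - m := by
  have integrable_id : Integrable (fun s ↦ s) (gaussianReal m v) :=
    (memLp_id_gaussianReal 1).integrable le_rfl
  have integrable_mul_id : Integrable (fun s ↦ gaussianLR v t s * s) (gaussianReal m v) :=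
    MemLp.integrable_mul (p := 2) (q := 2) (memLp_gaussianLR m v t 2) (memLp_id_gaussianReal 2)
  simp only [sub_mul, one_mul]
  rw [integral_sub integrable_mul_id integrable_id, integral_gaussianLR_mul,
    integral_id_gaussianReal, integral_id_gaussianReal]

lemma integral_prodLRSubOne (v : ℝ≥0) (s : Finset ι) (x t : ι → ℝ) :
    ∫ y, prodLRSubOne v s t y ∂piGaussian v x = ∏ i ∈ s, (Real.exp (x i * t i) - 1) := by
  simp only [prodLRSubOne, ← integral_gaussianLR_sub_one _ v]
  exact integral_finsetProd_eq_prod s fun i u ↦ gaussianLR v (t i) u - 1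

lemma integral_prodLRSubOne_insert_mul_eval [DecidableEq ι] (v : ℝ≥0) {s : Finset ι} {k : ι}
    (hk : k ∉ s) (x t : ι → ℝ) :
    ∫ y, prodLRSubOne v (insert k s) t y * y k ∂piGaussian v x =
      (Real.exp (x k * t k) * (x k + v * t k) - x k) * ∏ i ∈ s, (Real.exp (x i * t i) - 1) := by
  let f (i : ι) (u : ℝ) : ℝ := (gaussianLR v (t i) u - 1) * if i = k then u else 1
  have f_self : f k = fun u ↦ (gaussianLR v (t k) u - 1) * u := by simp [f]
  have f_of_mem {i : ι} (hi : i ∈ s) : f i = fun u ↦ gaussianLR v (t i) u - 1 := by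
    simp [f, ne_of_mem_of_not_mem hi hk]
  calc ∫ y, prodLRSubOne v (insert k s) t y * y k ∂piGaussian v x
      = ∫ y, ∏ i ∈ insert k s, f i (y i) ∂piGaussian v x := by
        simp only [prodLRSubOne, f, Finset.prod_mul_distrib, Finset.prod_ite_eq',
          Finset.mem_insert_self, if_true]
    _ = ∏ i ∈ insert k s, ∫ u, f i u ∂gaussianReal (x i) v := integral_finsetProd_eq_prod _ f
    _ = (Real.exp (x k * t k) * (x k + v * t k) - x k) * ∏ i ∈ s, (Real.exp (x i * t i) - 1) := by
        rw [Finset.prod_insert hk, f_self, integral_gaussianLR_sub_one_mul_id]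
        congr 1
        exact Finset.prod_congr rfl fun i hi ↦ by rw [f_of_mem hi, integral_gaussianLR_sub_one]

lemma integral_prodLRSubOne_mul [DecidableEq ι] {v : ℝ≥0} (s : Finset ι) {x : ι → ℝ} (t : ι → ℝ)
    {g : (ι → ℝ) → ℝ} (hg : MemLp g 2 (piGaussian v x)) :
    ∫ y, prodLRSubOne v s t y * g y ∂piGaussian v x =
      ∑ r ∈ s.powerset, (-1) ^ (s \ r).card * (Real.exp (∑ i ∈ r, x i * t i) *
        ∫ y, g y ∂piGaussian v (r.piecewise (fun i ↦ x i + v * t i) x)) := by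
  have memLp_prod (r : Finset ι) :
      MemLp (fun y ↦ ∏ i ∈ r, gaussianLR v (t i) (y i)) 2 (piGaussian v x) :=
    memLp_finsetProd two_ne_zero ENNReal.ofNat_ne_top fun i _ ↦ memLp_gaussianLR (x i) v (t i) 2
  have expand (y : ι → ℝ) : prodLRSubOne v s t y * g y = ∑ r ∈ s.powerset,
      (-1) ^ (s \ r).card * ((∏ i ∈ r, gaussianLR v (t i) (y i)) * g y) := by
    simp only [prodLRSubOne, sub_eq_add_neg, Finset.prod_add, Finset.prod_const, Finset.sum_mul]
    exact Finset.sum_congr rfl fun r _ ↦ by ring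
  have integrable_term (r : Finset ι) : Integrable (fun y ↦ (-1) ^ (s \ r).card *
      ((∏ i ∈ r, gaussianLR v (t i) (y i)) * g y)) (piGaussian v x) :=
    ((memLp_prod r).integrable_mul hg).const_mul _
  simp only [expand]
  rw [integral_finsetSum _ fun r _ ↦ integrable_term r]
  exact Finset.sum_congr rfl fun r _ ↦ by
    rw [integral_const_mul, integral_finsetProd_gaussianLR_mul]

lemma integral_prodLRSubOne_mul_eq_zero {v : ℝ≥0} {s : Finset ι} {x : ι → ℝ}
    (hx : Function.support x ⊆ s) {g : (ι → ℝ) → ℝ} (hg : MemLp g 2 (piGaussian v x))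
    (hg₀ : ∀ z, Function.support z ⊆ s → ∫ y, g y ∂piGaussian v z = 0) (t : ι → ℝ) :
    ∫ y, prodLRSubOne v s t y * g y ∂piGaussian v x = 0 := by
  classical
  rw [integral_prodLRSubOne_mul s t hg]
  refine Finset.sum_eq_zero fun r hr ↦ ?_
  rw [hg₀ _ fun i hi ↦ ?_, mul_zero, mul_zero]
  by_contra his
  have hir : i ∉ r := fun h ↦ his (Finset.mem_powerset.1 hr h)
  exact his (hx (by simpa [hir] using hi))

lemma integral_eq_zero_of_forall_integral_prodLRSubOne_mul_eq_zero {v : ℝ≥0} (hv : v ≠ 0)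
    {s : Finset ι} {g : (ι → ℝ) → ℝ} (hg : MemLp g 2 (piGaussian v 0))
    (hg₀ : ∀ z, Function.support z ⊂ s → ∫ y, g y ∂piGaussian v z = 0)
    (horth : ∀ t, ∫ y, prodLRSubOne v s t y * g y ∂piGaussian v 0 = 0) {z : ι → ℝ}
    (hz : Function.support z ⊆ s) :
    ∫ y, g y ∂piGaussian v z = 0 := by
  classical
  have hv' : (v : ℝ) ≠ 0 := mod_cast hv
  have mul_inv_smul : (fun i ↦ (0 : ι → ℝ) i + v * ((v : ℝ)⁻¹ • z) i) = z := by
    ext i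
    simp [hv']
  have support_piecewise (r : Finset ι) : Function.support (r.piecewise z 0) ⊆ r := fun i hi ↦ by
    by_contra hir
    exact hi (by simpa using Finset.piecewise_eq_of_notMem r z 0 hir)
  have piecewise_self : s.piecewise z 0 = z := by
    ext i
    by_cases his : i ∈ s
    · simp [his]
    · simpa [his] using (Function.notMem_support.1 fun hi ↦ his (hz hi)).symm
  -- Every proper subset of `s` contributes a mean supported strictly inside `s`, so only the full
  -- subset survives in the expansion, and its mean is `z`.
  have h := horth ((v : ℝ)⁻¹ • z)
  rw [integral_prodLRSubOne_mul s _ hg, mul_inv_smul,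
    Finset.sum_eq_single_of_mem s (Finset.mem_powerset_self s) fun r hr hrs ↦ ?_] at h
  · simpa [piecewise_self] using h
  · rw [hg₀ _ ((support_piecewise r).trans_ssubset ?_), mul_zero, mul_zero]
    exact Finset.coe_ssubset.2 ((Finset.mem_powerset.1 hr).ssubset_of_ne hrs)

end PiGaussian

section LocallyMinimumVariance

lemma integral_sum_add_mul_sq {Ω ι : Type*} {mΩ : MeasurableSpace Ω} [Fintype ι] {μ : Measure Ω}
    {F V : Ω → ι → ℝ} (hF : ∀ i, MemLp (fun ω ↦ F ω i) 2 μ)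
    (hV : ∀ i, MemLp (fun ω ↦ V ω i) 2 μ) (t : ℝ) :
    ∫ ω, ∑ i, (F ω i + t * V ω i) ^ 2 ∂μ = (∫ ω, ∑ i, V ω i ^ 2 ∂μ) * (t * t) +
      2 * (∫ ω, ∑ i, V ω i * F ω i ∂μ) * t + ∫ ω, ∑ i, F ω i ^ 2 ∂μ := by
  have integrable_sq_V : Integrable (fun ω ↦ (∑ i, V ω i ^ 2) * (t * t)) μ :=
    (integrable_finsetSum _ fun i _ ↦ (hV i).integrable_sq).mul_const _
  have integrable_mul : Integrable (fun ω ↦ 2 * (∑ i, V ω i * F ω i) * t) μ :=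
    ((integrable_finsetSum _ fun i _ ↦ (hV i).integrable_mul (hF i)).const_mul _).mul_const _
  have integrable_sq_F : Integrable (fun ω ↦ ∑ i, F ω i ^ 2) μ :=
    integrable_finsetSum _ fun i _ ↦ (hF i).integrable_sq
  have expand (ω : Ω) : ∑ i, (F ω i + t * V ω i) ^ 2 =
      (∑ i, V ω i ^ 2) * (t * t) + 2 * (∑ i, V ω i * F ω i) * t + ∑ i, F ω i ^ 2 := by
    simp only [Finset.mul_sum, Finset.sum_mul, ← Finset.sum_add_distrib]
    exact Finset.sum_congr rfl fun i _ ↦ by ring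
  simp only [expand]
  rw [integral_add (integrable_sq_V.fun_add integrable_mul) integrable_sq_F,
    integral_add integrable_sq_V integrable_mul, integral_mul_const, integral_mul_const,
    integral_const_mul]

lemma integral_sum_mul_eq_zero_of_forall_lintegral_le {Ω ι : Type*} {mΩ : MeasurableSpace Ω}
    [Fintype ι] {μ : Measure Ω} {F V : Ω → ι → ℝ} (hF : ∀ i, MemLp (fun ω ↦ F ω i) 2 μ)
    (hV : ∀ i, MemLp (fun ω ↦ V ω i) 2 μ)
    (hmin : ∀ t : ℝ, ∫⁻ ω, ENNReal.ofReal (∑ i, F ω i ^ 2) ∂μ ≤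
      ∫⁻ ω, ENNReal.ofReal (∑ i, (F ω i + t * V ω i) ^ 2) ∂μ) :
    ∫ ω, ∑ i, V ω i * F ω i ∂μ = 0 := by
  have lintegral_eq {G : Ω → ι → ℝ} (hG : ∀ i, MemLp (fun ω ↦ G ω i) 2 μ) :
      ∫⁻ ω, ENNReal.ofReal (∑ i, G ω i ^ 2) ∂μ = ENNReal.ofReal (∫ ω, ∑ i, G ω i ^ 2 ∂μ) :=
    (ofReal_integral_eq_lintegral_ofReal
      (integrable_finsetSum _ fun i _ ↦ (hG i).integrable_sq)
      (.of_forall fun ω ↦ by positivity)).symm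
  have quadratic_nonneg (t : ℝ) : 0 ≤ (∫ ω, ∑ i, V ω i ^ 2 ∂μ) * (t * t) +
      2 * (∫ ω, ∑ i, V ω i * F ω i ∂μ) * t + 0 := by
    have h := hmin t
    rw [lintegral_eq hF,
      lintegral_eq (G := fun ω i ↦ F ω i + t * V ω i) fun i ↦ (hF i).add ((hV i).const_mul t),
      ENNReal.ofReal_le_ofReal_iff (integral_nonneg fun ω ↦ by positivity)] at h
    rw [integral_sum_add_mul_sq hF hV] at h
    linarith
  simpa [discrim] using discrim_le_zero quadratic_nonneg

variable {N S : ℕ} {σ : ℝ} {est : (Fin N → ℝ) → Fin N → ℝ} {x : Fin N → ℝ}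

lemma gaussP_eq_piGaussian (N : ℕ) (σ : ℝ) (x : Fin N → ℝ) :
    gaussP N σ x = piGaussian (σ ^ 2).toNNReal x :=
  rfl

instance (N : ℕ) (σ : ℝ) (x : Fin N → ℝ) : IsProbabilityMeasure (gaussP N σ x) := by
  rw [gaussP_eq_piGaussian]
  infer_instance

lemma memLp_eval_gaussP (N : ℕ) (σ : ℝ) (x : Fin N → ℝ) (p : ℝ≥0) (i : Fin N) :
    MemLp (fun y ↦ y i) p (gaussP N σ x) :=
  (memLp_id_gaussianReal p).comp_measurePreserving
    (measurePreserving_eval (fun i ↦ gaussianReal (x i) (σ ^ 2).toNNReal) i)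

lemma integral_eval_gaussP (N : ℕ) (σ : ℝ) (x : Fin N → ℝ) (i : Fin N) :
    ∫ y, y i ∂gaussP N σ x = x i :=
  (integral_comp_eval (μ := fun i ↦ gaussianReal (x i) (σ ^ 2).toNNReal) (f := fun u : ℝ ↦ u)
    (by fun_prop)).trans integral_id_gaussianReal

lemma unbiased_id (N S : ℕ) (σ : ℝ) : Unbiased N S σ id := fun x _ i ↦
  ⟨(memLp_eval_gaussP N σ x 1 i).integrable le_rfl, integral_eval_gaussP N σ x i⟩

lemma MSE_id_lt_top (N : ℕ) (σ : ℝ) (x : Fin N → ℝ) : MSE N σ id x < ⊤ := by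
  have integrable_sq_error : Integrable (fun y ↦ ∑ i, (y i - x i) ^ 2) (gaussP N σ x) :=
    integrable_finsetSum _ fun i _ ↦
      ((memLp_eval_gaussP N σ x 2 i).sub (memLp_const (x i))).integrable_sq
  exact integrable_sq_error.lintegral_lt_top

lemma memLp_of_MSE_lt_top (hest : Measurable est) (hMSE : MSE N σ est x < ⊤) (i : Fin N) :
    MemLp (fun y ↦ est y i) 2 (gaussP N σ x) := by
  have aestronglyMeasurable_error : AEStronglyMeasurable (fun y ↦ est y i - x i) (gaussP N σ x) :=
    (by fun_prop : Measurable fun y ↦ est y i - x i).aestronglyMeasurable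
  have memLp_error : MemLp (fun y ↦ est y i - x i) 2 (gaussP N σ x) := by
    rw [memLp_two_iff_integrable_sq aestronglyMeasurable_error]
    refine ⟨aestronglyMeasurable_error.pow 2, ?_⟩
    rw [hasFiniteIntegral_iff_ofReal (.of_forall fun y ↦ sq_nonneg _)]
    refine (lintegral_mono fun y ↦ ENNReal.ofReal_le_ofReal ?_).trans_lt hMSE
    exact Finset.single_le_sum (f := fun i ↦ (est y i - x i) ^ 2) (fun i _ ↦ sq_nonneg _)
      (Finset.mem_univ i)
  exact (memLp_error.add (memLp_const (x i))).ae_eq (.of_forall fun y ↦ sub_add_cancel _ _)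

lemma Unbiased.add_const_smul {V : (Fin N → ℝ) → Fin N → ℝ} (hest : Unbiased N S σ est)
    (hV : ∀ z ∈ sparseSet N S, ∀ i,
      Integrable (fun y ↦ V y i) (gaussP N σ z) ∧ ∫ y, V y i ∂gaussP N σ z = 0) (t : ℝ) :
    Unbiased N S σ (est + t • V) := by
  intro z hz i
  obtain ⟨integrable_est, integral_est⟩ := hest z hz i
  obtain ⟨integrable_V, integral_V⟩ := hV z hz i
  refine ⟨integrable_est.add (integrable_V.const_mul t), ?_⟩
  calc ∫ y, (est y i + t * V y i) ∂gaussP N σ z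
      = ∫ y, est y i ∂gaussP N σ z + t * ∫ y, V y i ∂gaussP N σ z := by
        rw [integral_add integrable_est (integrable_V.const_mul t), integral_const_mul]
    _ = z i := by rw [integral_est, integral_V, mul_zero, add_zero]

/-- `est` is a locally minimum variance unbiased (LMVU) estimator at `x`: it is measurable, unbiased
on all `S`-sparse vectors, and no other such estimator has a smaller mean squared error at `x`. -/
structure IsLMVU (N S : ℕ) (σ : ℝ) (est : (Fin N → ℝ) → Fin N → ℝ) (x : Fin N → ℝ) : Prop where
  measurable : Measurable est
  unbiased : Unbiased N S σ est
  MSE_le : ∀ est', Measurable est' → Unbiased N S σ est' → MSE N σ est x ≤ MSE N σ est' x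

namespace IsLMVU

lemma memLp (h : IsLMVU N S σ est x) (i : Fin N) : MemLp (fun y ↦ est y i) 2 (gaussP N σ x) :=
  memLp_of_MSE_lt_top h.measurable
    ((h.MSE_le id measurable_id (unbiased_id N S σ)).trans_lt (MSE_id_lt_top N σ x)) i

lemma integral_sum_mul_sub_eq_zero (h : IsLMVU N S σ est x) {V : (Fin N → ℝ) → Fin N → ℝ}
    (hVm : Measurable V) (hVx : ∀ i, MemLp (fun y ↦ V y i) 2 (gaussP N σ x))
    (hV : ∀ z ∈ sparseSet N S, ∀ i,
      Integrable (fun y ↦ V y i) (gaussP N σ z) ∧ ∫ y, V y i ∂gaussP N σ z = 0) :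
    ∫ y, ∑ i, V y i * (est y i - x i) ∂gaussP N σ x = 0 := by
  refine integral_sum_mul_eq_zero_of_forall_lintegral_le
    (fun i ↦ (h.memLp i).sub (memLp_const (x i))) hVx fun t ↦ ?_
  simpa only [MSE, Pi.add_apply, Pi.smul_apply, smul_eq_mul, add_sub_right_comm] using
    h.MSE_le (est + t • V) (h.measurable.add (hVm.const_smul t))
      (h.unbiased.add_const_smul hV t)

lemma integral_mul_eq_zero (h : IsLMVU N S σ est x) (hx : x ∈ sparseSet N S)
    {U : (Fin N → ℝ) → ℝ} (hUm : Measurable U) (hUx : MemLp U 2 (gaussP N σ x))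
    (hU : ∀ z ∈ sparseSet N S, Integrable U (gaussP N σ z) ∧ ∫ y, U y ∂gaussP N σ z = 0)
    (k : Fin N) :
    ∫ y, U y * est y k ∂gaussP N σ x = 0 := by
  have integral_mul_sub : ∫ y, U y * (est y k - x k) ∂gaussP N σ x = 0 := by
    have hV := h.integral_sum_mul_sub_eq_zero (V := fun y ↦ Pi.single k (U y)) ?_ ?_ ?_
    · simpa [Pi.single_apply] using hV
    · exact (measurable_update 0).comp hUm
    · intro i
      obtain rfl | hik := eq_or_ne i k <;> simp [*]
    · intro z hz i
      obtain rfl | hik := eq_or_ne i k <;> simp [*]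
  have integrable_mul_est : Integrable (fun y ↦ U y * est y k) (gaussP N σ x) :=
    hUx.integrable_mul (h.memLp k)
  simp only [mul_sub] at integral_mul_sub
  rwa [integral_sub integrable_mul_est ((hU x hx).1.mul_const _), integral_mul_const, (hU x hx).2,
    zero_mul, sub_zero] at integral_mul_sub

end IsLMVU

end LocallyMinimumVariance

section NoUMVU

variable {N S : ℕ} {σ : ℝ} {est : (Fin N → ℝ) → Fin N → ℝ} {x : Fin N → ℝ}

lemma coe_supp (x : Fin N → ℝ) : (supp x : Set (Fin N)) = Function.support x := by
  ext i
  simp [supp]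

lemma exists_card_supp_eq (hSN : S ≤ N) : ∃ x : Fin N → ℝ, (supp x).card = S := by
  obtain ⟨s, -, hs⟩ := Finset.exists_subset_card_eq (s := (Finset.univ : Finset (Fin N)))
    (by simpa using hSN)
  refine ⟨fun i ↦ if i ∈ s then 1 else 0, ?_⟩
  simpa [supp] using hs

lemma exists_mem_eq_zero_of_mem_sparseSet (hx : x ∈ sparseSet N S) {s : Finset (Fin N)}
    (hs : S < s.card) : ∃ i ∈ s, x i = 0 := by
  obtain ⟨i, his, hix⟩ := Finset.exists_mem_notMem_of_card_lt_card (hx.trans_lt hs)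
  exact ⟨i, his, by simpa [supp] using hix⟩

lemma unbiased_zero_prodLRSubOne {s : Finset (Fin N)} (hs : S < s.card) (σ : ℝ) (t : Fin N → ℝ) :
    ∀ z ∈ sparseSet N S, Integrable (prodLRSubOne (σ ^ 2).toNNReal s t) (gaussP N σ z) ∧
      ∫ y, prodLRSubOne (σ ^ 2).toNNReal s t y ∂gaussP N σ z = 0 := by
  intro z hz
  obtain ⟨i, his, hiz⟩ := exists_mem_eq_zero_of_mem_sparseSet hz hs
  refine ⟨(memLp_prodLRSubOne _ s z t).integrable one_le_two, ?_⟩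
  rw [gaussP_eq_piGaussian, integral_prodLRSubOne]
  exact Finset.prod_eq_zero his (by simp [hiz])

lemma IsLMVU.integral_prodLRSubOne_mul_sub (h : IsLMVU N S σ est x) (hx : x ∈ sparseSet N S)
    {s : Finset (Fin N)} (hs : S ≤ s.card) {k : Fin N} (hk : k ∉ s) (t : Fin N → ℝ) :
    ∫ y, prodLRSubOne (σ ^ 2).toNNReal (insert k s) t y * (est y k - y k) ∂gaussP N σ x =
      -((Real.exp (x k * t k) * (x k + (σ ^ 2).toNNReal * t k) - x k) *
        ∏ i ∈ s, (Real.exp (x i * t i) - 1)) := by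
  have memLp_U := memLp_prodLRSubOne (σ ^ 2).toNNReal (insert k s) x t
  have integrable_mul_est : Integrable
      (fun y ↦ prodLRSubOne (σ ^ 2).toNNReal (insert k s) t y * est y k) (gaussP N σ x) :=
    memLp_U.integrable_mul (h.memLp k)
  have integrable_mul_eval : Integrable
      (fun y ↦ prodLRSubOne (σ ^ 2).toNNReal (insert k s) t y * y k) (gaussP N σ x) :=
    MemLp.integrable_mul (p := 2) (q := 2) memLp_U (memLp_eval_gaussP N σ x 2 k)
  have hs_insert : S < (insert k s).card := by rw [Finset.card_insert_of_notMem hk]; omega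
  simp only [mul_sub]
  rw [integral_sub integrable_mul_est integrable_mul_eval,
    h.integral_mul_eq_zero hx (measurable_prodLRSubOne _ _ t) memLp_U
      (unbiased_zero_prodLRSubOne hs_insert σ t), gaussP_eq_piGaussian,
    integral_prodLRSubOne_insert_mul_eval _ hk, zero_sub]

lemma Unbiased.integral_sub_eval (h : Unbiased N S σ est) (hx : x ∈ sparseSet N S) (k : Fin N) :
    ∫ y, (est y k - y k) ∂gaussP N σ x = 0 := by
  rw [integral_sub (h x hx k).1 ((memLp_eval_gaussP N σ x 1 k).integrable le_rfl), (h x hx k).2,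
    integral_eval_gaussP, sub_self]

lemma IsLMVU.memLp_sub_eval (h : IsLMVU N S σ est x) (k : Fin N) :
    MemLp (fun y ↦ est y k - y k) 2 (gaussP N σ x) :=
  (h.memLp k).sub (memLp_eval_gaussP N σ x 2 k)

lemma zero_mem_sparseSet (N S : ℕ) : (0 : Fin N → ℝ) ∈ sparseSet N S := by
  simp [sparseSet, supp]

lemma IsLMVU.integral_sub_eval_eq_zero_of_supp_subset_insert (h : IsLMVU N S σ est 0) (hσ : σ ≠ 0)
    {s : Finset (Fin N)} (hs : s.Nonempty) (hsS : s.card = S) {k : Fin N} (hk : k ∉ s)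
    (hx : supp x ⊆ insert k s) :
    ∫ y, (est y k - y k) ∂gaussP N σ x = 0 := by
  refine integral_eq_zero_of_forall_integral_prodLRSubOne_mul_eq_zero (s := insert k s)
    (by simpa using hσ) (h.memLp_sub_eval k) (fun z hz ↦ ?_) (fun t ↦ ?_)
    (by rwa [← coe_supp, Finset.coe_subset])
  · rw [← coe_supp, Finset.coe_ssubset] at hz
    have card_supp_lt := Finset.card_lt_card hz
    rw [Finset.card_insert_of_notMem hk, hsS] at card_supp_lt
    exact h.unbiased.integral_sub_eval (Nat.le_of_lt_succ card_supp_lt) k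
  · refine (h.integral_prodLRSubOne_mul_sub (zero_mem_sparseSet N S) hsS.ge hk t).trans ?_
    obtain ⟨i, hi⟩ := hs
    rw [Finset.prod_eq_zero hi (by simp), mul_zero, neg_zero]

lemma IsLMVU.not_isLMVU_of_card_supp_eq (h₀ : IsLMVU N S σ est 0) (hσ : σ ≠ 0) (hS : 1 ≤ S)
    (hSN : S < N) (hxS : (supp x).card = S) : ¬ IsLMVU N S σ est x := by
  intro hx
  obtain ⟨k, -, hk⟩ : ∃ k ∈ Finset.univ, k ∉ supp x :=
    Finset.exists_mem_notMem_of_card_lt_card (by simpa [hxS] using hSN)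
  have hxk : x k = 0 := by simpa [supp] using hk
  have supp_nonempty : (supp x).Nonempty := Finset.card_pos.1 (hxS ▸ hS)
  have orthogonal : ∫ y, prodLRSubOne (σ ^ 2).toNNReal (insert k (supp x)) 1 y *
      (est y k - y k) ∂gaussP N σ x = 0 := by
    refine integral_prodLRSubOne_mul_eq_zero ?_ (hx.memLp_sub_eval k) (fun z hz ↦ ?_) 1
    · rw [← coe_supp, Finset.coe_subset]
      exact Finset.subset_insert k _
    · rw [← coe_supp, Finset.coe_subset] at hz
      exact h₀.integral_sub_eval_eq_zero_of_supp_subset_insert hσ supp_nonempty hxS hk hz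
  rw [hx.integral_prodLRSubOne_mul_sub hxS.le hxS.ge hk, neg_eq_zero, mul_eq_zero] at orthogonal
  rcases orthogonal with variance_eq_zero | prod_eq_zero
  · exact hσ (by simpa [hxk] using variance_eq_zero)
  · obtain ⟨i, hi, hxi⟩ := Finset.prod_eq_zero_iff.1 prod_eq_zero
    have : x i ≠ 0 := by simpa [supp] using hi
    exact this (by simpa [sub_eq_zero] using hxi)

end NoUMVU

/-- For `S < N` there is no uniformly minimum variance unbiased (UMVU) estimator. -/
theorem stmt_2 (N S : ℕ) (σ : ℝ) (hσ : 0 < σ) (hS : 1 ≤ S) (hSN : S < N) :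
    ¬ ∃ estStar : (Fin N → ℝ) → Fin N → ℝ,
        Measurable estStar ∧ Unbiased N S σ estStar ∧
        ∀ est : (Fin N → ℝ) → Fin N → ℝ, Measurable est → Unbiased N S σ est →
          ∀ x ∈ sparseSet N S, MSE N σ estStar x ≤ MSE N σ est x := by
  rintro ⟨estStar, estStar_measurable, estStar_unbiased, MSE_estStar_le⟩
  have isLMVU {x : Fin N → ℝ} (hx : x ∈ sparseSet N S) : IsLMVU N S σ estStar x :=
    ⟨estStar_measurable, estStar_unbiased, fun est hm hu ↦ MSE_estStar_le est hm hu x hx⟩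
  obtain ⟨x, hx⟩ : ∃ x : Fin N → ℝ, (supp x).card = S := exists_card_supp_eq hSN.le
  exact (isLMVU (zero_mem_sparseSet N S)).not_isLMVU_of_card_supp_eq hσ.ne' hS hSN hx (isLMVU hx.le)
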